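/- arXiv:1811.09774 — 2 statements merged into one kernel-verified Lean document; each statement's English description precedes it below -/
import Mathlib

section
/- Let m ≥ 2 and set f_j = A_j/z₁ ∈ K = Frac(R) for j ∈ {1, …, m−2, m}. Then ι_{V_{m+1}} ι_{V_m} ι_{V₁} ι_{V₂} ⋯ ι_{V_{m−1}} ( (z₁ A₁ A₂ ⋯ A_{m−2} A_m)^{−1} Ω ) = dlog f₁ ∧ dlog f₂ ∧ ⋯ ∧ dlog f_{m−2} ∧ dlog f_m in ⋀^{m−1}_K Ω_{K/ℂ}. (This is Proposition 3.8 of the paper: the contraction of the meromorphic volume form with simple poles along the Schubert anticanonical divisor of the even quadric Q_{2m}.) -/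
set_option synthInstance.maxHeartbeats 1000000
set_option maxHeartbeats 1000000

noncomputable section

open MvPolynomial

/-- The coordinate ring `R = ℂ[z₂, z₃, …, z_{2m+1}]` of the affine chart
`{x₀ ≠ 0}` of the even quadric `Q_{2m}`. -/
abbrev QevR (m : ℕ) := MvPolynomial {j : ℕ // 2 ≤ j ∧ j ≤ 2 * m + 1} ℂ

/-- The fraction field `K = Frac(R)`. -/
abbrev QevK (m : ℕ) := FractionRing (QevR m)

/-- The coordinate `z_j` for `2 ≤ j ≤ 2m+1`. -/
def qevZ (m j : ℕ) : QevR m :=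
  if h : 2 ≤ j ∧ j ≤ 2 * m + 1 then X ⟨j, h⟩ else 0

/-- `A_j = z_{2j} z_{2j+1}` for `1 ≤ j ≤ m`. -/
def qevA (m j : ℕ) : QevR m := qevZ m (2 * j) * qevZ m (2 * j + 1)

/-- `z₁ = −(z₂z₃ + z₄z₅ + ⋯ + z_{2m}z_{2m+1})` (the quadric relation solved
for `z₁`). -/
def qevZ1 (m : ℕ) : QevR m := -(∑ i ∈ Finset.Icc 1 m, qevA m i)

/-- The ℂ-derivations `V_j = z_{2j}∂/∂z_{2j} − z_{2j+1}∂/∂z_{2j+1}` for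
`1 ≤ j ≤ m−1`, `V_m = z_{2m}∂/∂z_{2m} + ∑_{i=1}^{m−1} z_{2i+1}∂/∂z_{2i+1}` and
`V_{m+1} = z_{2m+1}∂/∂z_{2m+1} + ∑_{i=1}^{m−1} z_{2i+1}∂/∂z_{2i+1}`. -/
def qevV (m i : ℕ) : Derivation ℂ (QevR m) (QevR m) :=
  if i = m then
    MvPolynomial.mkDerivation ℂ (fun s =>
      if s.1 = 2 * m then qevZ m s.1
      else if s.1 % 2 = 1 ∧ s.1 ≤ 2 * m - 1 then qevZ m s.1 else 0)
  else if i = m + 1 then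
    MvPolynomial.mkDerivation ℂ (fun s =>
      if s.1 = 2 * m + 1 then qevZ m s.1
      else if s.1 % 2 = 1 ∧ s.1 ≤ 2 * m - 1 then qevZ m s.1 else 0)
  else
    MvPolynomial.mkDerivation ℂ (fun s =>
      if s.1 = 2 * i then qevZ m s.1
      else if s.1 = 2 * i + 1 then -(qevZ m s.1) else 0)

/-- Contraction (interior product) of `⋀_A Ω_{A/ℂ}` by the `A`-linear functional
`Ω_{A/ℂ} → A` determined by `dg ↦ V g`, for a ℂ-derivation `V` of `A`. -/
def contrDer {A : Type} [CommRing A] [Algebra ℂ A] (V : Derivation ℂ A A) :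
    ExteriorAlgebra A (Ω[A⁄ℂ]) →ₗ[A] ExteriorAlgebra A (Ω[A⁄ℂ]) :=
  CliffordAlgebra.contractLeft ((KaehlerDifferential.linearMapEquivDerivation ℂ A).symm V)

/-- `Ω = dz₂∧dz₃∧⋯∧dz_{2m+1} ∈ ⋀^{2m}_R Ω_{R/ℂ}`. -/
def qevOmega (m : ℕ) : ExteriorAlgebra (QevR m) (Ω[QevR m⁄ℂ]) :=
  (((List.Ico 2 (2 * m + 2)).map (fun j =>
    ExteriorAlgebra.ι (QevR m) (KaehlerDifferential.D ℂ (QevR m) (qevZ m j)))).prod)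

/-- `dlog f = f⁻¹ df ∈ Ω_{K/ℂ}`. -/
def dlog (m : ℕ) (f : QevK m) : Ω[QevK m⁄ℂ] :=
  f⁻¹ • KaehlerDifferential.D ℂ (QevK m) f

/-- The image of `A_j` in `K`. -/
def qevAK (m j : ℕ) : QevK m := algebraMap (QevR m) (QevK m) (qevA m j)

/-- The image of `z₁` in `K`. -/
def qevZ1K (m : ℕ) : QevK m := algebraMap (QevR m) (QevK m) (qevZ1 m)

/-- `Ω = dz₂∧dz₃∧⋯∧dz_{2m+1}`, viewed in `⋀_K Ω_{K/ℂ}`. -/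
def qevOmegaK (m : ℕ) : ExteriorAlgebra (QevK m) (Ω[QevK m⁄ℂ]) :=
  (((List.Ico 2 (2 * m + 2)).map (fun j =>
    ExteriorAlgebra.ι (QevK m)
      (KaehlerDifferential.D ℂ (QevK m) (algebraMap (QevR m) (QevK m) (qevZ m j))))).prod)

/-!
The derivations `V_1, …, V_{m-1}` and `H_m = V_m - V_{m+1}` are all of the form
`H_j = z_{2j} ∂/∂z_{2j} - z_{2j+1} ∂/∂z_{2j+1}`, and `ι_{V_{m+1}} ι_{V_m} = ι_{V_m} ι_{H_m}` because
`ι_{V_m}` squares to zero. The two-forms `dz_{2k} ∧ dz_{2k+1}` are central, and `ι_{H_k}` sends the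
`k`-th one to `dA_k` and kills the others, so contracting `Ω` with all the `H_j` leaves
`dA_m ∧ dA_1 ∧ ⋯ ∧ dA_{m-1}`. Since `dz_1 = -∑ dA_k`, exchanging the first and last factors turns
this into `dz_1 ∧ dA_1 ∧ ⋯ ∧ dA_{m-2} ∧ dA_m`, where, modulo `dz_1`, each `dA_k` equals
`A_k dlog f_k`. Finally `V_m` fixes `z_1` and every `A_k`, hence kills `dlog f_k`, so that `ι_{V_m}`
only replaces the factor `dz_1` by `z_1`.
-/

section Exterior

open ExteriorAlgebra (ι ι_sq_zero ι_add_mul_swap ι_mul_prod_list)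
open CliffordAlgebra (contractLeft contractLeft_ι_mul contractLeft_one contractLeft_comm
  contractLeft_contractLeft)

variable {κ R M : Type*} [CommRing R] [AddCommGroup M] [Module R M]

theorem ι_mul_prod_map_ι_of_mem {l : List κ} {j : κ} (hj : j ∈ l) (a : κ → M) :
    ι R (a j) * (l.map fun k => ι R (a k)).prod = 0 := by
  obtain ⟨i, rfl⟩ := List.get_of_mem hj
  have h := ι_mul_prod_list (R := R) (fun i : Fin l.length => a (l.get i)) i
  rwa [← Function.comp_def (fun k => ι R (a k)) l.get, ← List.map_ofFn,
    List.ofFn_get] at h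

theorem ι_sum_mul_prod_map_ι (l : List κ) (a : κ → M) :
    ι R (l.map a).sum * (l.map fun k => ι R (a k)).prod = 0 := by
  rw [map_list_sum, List.map_map, ← List.sum_map_mul_right]
  refine List.sum_eq_zero fun w hw => ?_
  obtain ⟨j, hj, rfl⟩ := List.mem_map.1 hw
  exact ι_mul_prod_map_ι_of_mem hj a

theorem ι_mul_prod_map_ι_mul_ι_self (l : List κ) (a : κ → M) (v : M) :
    ι R v * ((l.map fun k => ι R (a k)).prod * ι R v) = 0 := by
  simpa [Function.comp_def] using
    ι_mul_prod_map_ι_of_mem (R := R) (l := l.map a ++ [v]) (j := v) (by simp) id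

theorem ι_mul_prod_map_ι_mul_ι_swap (l : List κ) (a : κ → M) (u v : M) :
    ι R u * ((l.map fun k => ι R (a k)).prod * ι R v) =
      -(ι R v * ((l.map fun k => ι R (a k)).prod * ι R u)) := by
  have h := ι_mul_prod_map_ι_mul_ι_self (R := R) l a (u + v)
  simp only [map_add, add_mul, mul_add, ι_mul_prod_map_ι_mul_ι_self, zero_add, add_zero] at h
  exact eq_neg_of_add_eq_zero_right h

theorem ι_mul_prod_map_ι_smul_add_smul {l : List κ} {a b : κ → M} {c t : κ → R} {s : M}
    (h : ∀ k ∈ l, a k = c k • b k + t k • s) :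
    ι R s * (l.map fun k => ι R (a k)).prod =
      (l.map c).prod • (ι R s * (l.map fun k => ι R (b k)).prod) := by
  induction l with
  | nil => simp
  | cons j l ih =>
    have anticomm : ∀ v : M, ι R s * ι R v = -(ι R v * ι R s) :=
      fun v => eq_neg_of_add_eq_zero_left (ι_add_mul_swap s v)
    have first : ι R s * ι R (a j) = c j • (ι R s * ι R (b j)) := by
      rw [h j List.mem_cons_self, map_add, map_smul, map_smul, mul_add, mul_smul_comm,
        mul_smul_comm, ι_sq_zero, smul_zero, add_zero]
    simp only [List.map_cons, List.prod_cons]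
    rw [← mul_assoc, first, anticomm, smul_mul_assoc, neg_mul, mul_assoc,
      ih fun k hk => h k (List.mem_cons_of_mem _ hk), mul_smul_comm, ← smul_neg, smul_smul,
      ← mul_assoc, ← neg_mul, ← anticomm, mul_assoc]

theorem commute_ι_mul_ι_ι (x y v : M) :
    Commute (ι R x * ι R y) (ι R v) := by
  have anticomm : ∀ u : M, ι R u * ι R v = -(ι R v * ι R u) :=
    fun u => eq_neg_of_add_eq_zero_left (ι_add_mul_swap u v)
  rw [commute_iff_eq, mul_assoc, anticomm y, mul_neg, ← mul_assoc, anticomm x, neg_mul, neg_neg,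
    mul_assoc]

theorem contractLeft_contractLeft_eq_sub (d d' : Module.Dual R M) (w : ExteriorAlgebra R M) :
    contractLeft d' (contractLeft d w) = contractLeft d (contractLeft (d - d') w) := by
  rw [map_sub, LinearMap.sub_apply, map_sub, contractLeft_contractLeft, zero_sub,
    contractLeft_comm]

theorem contractLeft_prod_map_ι_eq_zero {d : Module.Dual R M} {l : List κ} {a : κ → M}
    (h : ∀ k ∈ l, d (a k) = 0) :
    contractLeft d (l.map fun k => ι R (a k)).prod = 0 := by
  induction l with
  | nil => rw [List.map_nil, List.prod_nil, contractLeft_one]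
  | cons j l ih =>
    rw [List.map_cons, List.prod_cons, contractLeft_ι_mul, h j List.mem_cons_self,
      ih fun k hk => h k (List.mem_cons_of_mem _ hk), zero_smul, mul_zero, sub_zero]

theorem foldr_contractLeft_ι_mul_ι_mul {l : List κ} {d : κ → Module.Dual R M} {x y : M}
    (hx : ∀ i ∈ l, d i x = 0) (hy : ∀ i ∈ l, d i y = 0) (w : ExteriorAlgebra R M) :
    l.foldr (fun i ω => contractLeft (d i) ω) (ι R x * ι R y * w) =
      ι R x * ι R y * l.foldr (fun i ω => contractLeft (d i) ω) w := by
  induction l with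
  | nil => rfl
  | cons i l ih =>
    rw [List.foldr_cons, List.foldr_cons, ih (fun j hj => hx j (List.mem_cons_of_mem _ hj))
        (fun j hj => hy j (List.mem_cons_of_mem _ hj)), mul_assoc, contractLeft_ι_mul,
      contractLeft_ι_mul, hx i List.mem_cons_self, hy i List.mem_cons_self]
    simp only [zero_smul, zero_sub, mul_neg, neg_neg, mul_assoc]

theorem foldr_contractLeft_prod_pairs {l : List κ} (hl : l.Nodup) {d : κ → Module.Dual R M}
    {x y : κ → M} (hx : ∀ i ∈ l, ∀ k ∈ l, k ≠ i → d i (x k) = 0)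
    (hy : ∀ i ∈ l, ∀ k ∈ l, k ≠ i → d i (y k) = 0) :
    l.foldr (fun i ω => contractLeft (d i) ω)
        (l.map fun k => ι R (x k) * ι R (y k)).prod =
      (l.map fun k => ι R (d k (x k) • y k - d k (y k) • x k)).prod := by
  induction l with
  | nil => rfl
  | cons j l ih =>
    obtain ⟨hj, hl⟩ := List.nodup_cons.1 hl
    have ne_of_mem : ∀ k ∈ l, k ≠ j := fun k hk e => hj (e ▸ hk)
    simp only [List.forall_mem_cons] at hx hy
    obtain ⟨⟨-, hxj⟩, hx⟩ := hx
    obtain ⟨⟨-, hyj⟩, hy⟩ := hy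
    have tail_killed : contractLeft (d j)
        (l.map fun k => ι R (d k (x k) • y k - d k (y k) • x k)).prod = 0 := by
      refine contractLeft_prod_map_ι_eq_zero fun k hk => ?_
      rw [map_sub, map_smul, map_smul, hxj k hk (ne_of_mem k hk), hyj k hk (ne_of_mem k hk),
        smul_zero, smul_zero, sub_zero]
    rw [List.foldr_cons, List.map_cons, List.map_cons, List.prod_cons, List.prod_cons,
      foldr_contractLeft_ι_mul_ι_mul (fun i hi => (hx i hi).1 (ne_of_mem i hi).symm)
        (fun i hi => (hy i hi).1 (ne_of_mem i hi).symm),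
      ih hl (fun i hi => (hx i hi).2) (fun i hi => (hy i hi).2), mul_assoc, contractLeft_ι_mul,
      contractLeft_ι_mul, tail_killed, mul_zero, sub_zero, mul_smul_comm, map_sub, map_smul,
      map_smul, sub_mul, smul_mul_assoc, smul_mul_assoc]

end Exterior

theorem prod_map_Ico_two_eq_prod_pairs {N : Type*} [Monoid N] (g : ℕ → N) (m : ℕ) :
    ((List.Ico 2 (2 * m + 2)).map g).prod =
      ((List.Ico 1 (m + 1)).map fun k => g (2 * k) * g (2 * k + 1)).prod := by
  induction m with
  | zero => rfl
  | succ m ih =>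
    rw [show 2 * (m + 1) + 2 = 2 * m + 2 + 1 + 1 by ring, List.Ico.succ_top (by lia),
      List.Ico.succ_top (by lia), List.Ico.succ_top (n := 1) (by lia)]
    simp only [List.map_append, List.prod_append, ih, List.map_singleton, List.prod_singleton,
      mul_assoc, mul_add, mul_one]

theorem derivation_div_eq_zero {k K : Type*} [CommRing k] [Field K] [Algebra k K]
    {V : Derivation k K K} {f g : K} (hf : V f = f) (hg : V g = g) : V (f / g) = 0 := by
  rw [V.leibniz_div, hf, hg, smul_eq_mul g, smul_eq_mul f, mul_comm g, sub_self, smul_zero]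

section Quadric

open ExteriorAlgebra (ι)
open KaehlerDifferential (D)

variable {m : ℕ}

theorem contrDer_eq_contractLeft {A : Type} [CommRing A] [Algebra ℂ A] (V : Derivation ℂ A A) :
    contrDer V = CliffordAlgebra.contractLeft V.liftKaehlerDifferential :=
  rfl

theorem D_eq_smul_dlog_div_add {f g : QevK m} (hf : f ≠ 0) (hg : g ≠ 0) :
    D ℂ (QevK m) f = f • dlog m (f / g) + (f / g) • D ℂ (QevK m) g := by
  have smul_dlog : f • dlog m (f / g) = g • D ℂ (QevK m) (f / g) := by
    rw [dlog, smul_smul, inv_div, mul_div_cancel₀ g hf]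
  have leibniz := (D ℂ (QevK m)).leibniz (f / g) g
  rw [div_mul_cancel₀ f hg] at leibniz
  rw [smul_dlog, leibniz]
  exact add_comm _ _

/-- The image of the coordinate `z_j` in `K`. -/
def qevZK (m j : ℕ) : QevK m := algebraMap (QevR m) (QevK m) (qevZ m j)

theorem qevZ_eq_X {j : ℕ} (h : 2 ≤ j ∧ j ≤ 2 * m + 1) : qevZ m j = X ⟨j, h⟩ :=
  dif_pos h

theorem qevAK_eq_mul (m k : ℕ) : qevAK m k = qevZK m (2 * k) * qevZK m (2 * k + 1) :=
  map_mul _ _ _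

theorem qevZ1K_eq_neg_sum (m : ℕ) : qevZ1K m = -∑ k ∈ Finset.Icc 1 m, qevAK m k := by
  simp only [qevZ1K, qevZ1, qevAK, map_neg, map_sum]

theorem qevAK_ne_zero {k : ℕ} (hk : 1 ≤ k) (hkm : k ≤ m) : qevAK m k ≠ 0 := by
  refine (map_ne_zero_iff _ (IsFractionRing.injective (QevR m) (QevK m))).2 (mul_ne_zero ?_ ?_)
  all_goals
    rw [qevZ_eq_X (by lia)]
    exact X_ne_zero _

theorem prod_map_qevAK_ne_zero {l : List ℕ} (hl : ∀ k ∈ l, 1 ≤ k ∧ k ≤ m) :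
    (l.map (qevAK m)).prod ≠ 0 := by
  refine List.prod_ne_zero fun h => ?_
  obtain ⟨k, hk, hk0⟩ := List.mem_map.1 h
  exact qevAK_ne_zero (hl k hk).1 (hl k hk).2 hk0

theorem prod_map_qevAK (m : ℕ) :
    ((List.Ico 1 (m - 1) ++ [m]).map (qevAK m)).prod =
      (∏ k ∈ Finset.Icc 1 (m - 2), qevAK m k) * qevAK m m := by
  rw [List.map_append, List.prod_append, List.map_singleton, List.prod_singleton]
  rfl

theorem qevZ1K_ne_zero (hm : 1 ≤ m) : qevZ1K m ≠ 0 := by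
  refine (map_ne_zero_iff _ (IsFractionRing.injective (QevR m) (QevK m))).2 fun h => ?_
  let p : {j : ℕ // 2 ≤ j ∧ j ≤ 2 * m + 1} → ℂ := fun s => if s.1 ≤ 3 then 1 else 0
  have eval_one : eval p (qevA m 1) = 1 := by
    simp [qevA, qevZ_eq_X (m := m) (j := 2) (by lia), qevZ_eq_X (m := m) (j := 3) (by lia), p]
  have eval_of_ne : ∀ k ∈ Finset.Icc 1 m, k ≠ 1 → eval p (qevA m k) = 0 := by
    intro k hk hk1
    obtain ⟨h1, h2⟩ := Finset.mem_Icc.1 hk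
    rw [qevA, qevZ_eq_X (by lia), map_mul, eval_X, show p _ = 0 from if_neg (by grind), zero_mul]
  have eval_Z1 : eval p (qevZ1 m) = -1 := by
    rw [qevZ1, map_neg, map_sum, Finset.sum_eq_single_of_mem 1 (by simpa using hm) eval_of_ne,
      eval_one]
  simp [h] at eval_Z1

theorem qevOmegaK_eq_prod_pairs (hm : 1 ≤ m) :
    qevOmegaK m = ((m :: List.Ico 1 m).map fun k =>
      ι (QevK m) (D ℂ (QevK m) (qevZK m (2 * k))) *
        ι (QevK m) (D ℂ (QevK m) (qevZK m (2 * k + 1)))).prod := by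
  have last_commutes := Commute.list_prod_right
    ((List.Ico 1 m).map fun k =>
      ι (QevK m) (D ℂ (QevK m) (qevZK m (2 * k))) *
        ι (QevK m) (D ℂ (QevK m) (qevZK m (2 * k + 1))))
    (ι (QevK m) (D ℂ (QevK m) (qevZK m (2 * m))) *
      ι (QevK m) (D ℂ (QevK m) (qevZK m (2 * m + 1))))
    (List.forall_mem_map.2 fun k _ =>
      (commute_ι_mul_ι_ι _ _ _).mul_right (commute_ι_mul_ι_ι _ _ _))
  rw [qevOmegaK, prod_map_Ico_two_eq_prod_pairs, List.Ico.succ_top hm, List.map_append,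
    List.prod_append, List.map_singleton, List.prod_singleton, List.map_cons, List.prod_cons]
  exact last_commutes.eq.symm

theorem D_qevZ1K (hm : 2 ≤ m) :
    D ℂ (QevK m) (qevZ1K m) =
      -(D ℂ (QevK m) (qevAK m (m - 1)) +
        ((List.Ico 1 (m - 1) ++ [m]).map fun k => D ℂ (QevK m) (qevAK m k)).sum) := by
  obtain ⟨n, rfl⟩ := Nat.exists_eq_add_of_le' hm
  have sum_Ico : ((List.Ico 1 (n + 1)).map fun k => D ℂ (QevK (n + 2)) (qevAK (n + 2) k)).sum =
      ∑ k ∈ Finset.Icc 1 n, D ℂ (QevK (n + 2)) (qevAK (n + 2) k) :=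
    rfl
  rw [qevZ1K_eq_neg_sum, map_neg, map_sum, Finset.sum_Icc_succ_top (by lia),
    Finset.sum_Icc_succ_top (by lia), Nat.add_sub_cancel (n + 1) 1, List.map_append,
    List.sum_append, sum_Ico, List.map_singleton, List.sum_singleton]
  abel

theorem prod_ι_D_qevAK (hm : 2 ≤ m) :
    ((m :: List.Ico 1 m).map fun k => ι (QevK m) (D ℂ (QevK m) (qevAK m k))).prod =
      ((List.Ico 1 (m - 1) ++ [m]).map (qevAK m)).prod •
        (ι (QevK m) (D ℂ (QevK m) (qevZ1K m)) *
          ((List.Ico 1 (m - 1) ++ [m]).map fun k =>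
            ι (QevK m) (dlog m (qevAK m k / qevZ1K m))).prod) := by
  have D_qevAK : ∀ k ∈ List.Ico 1 (m - 1) ++ [m], D ℂ (QevK m) (qevAK m k) =
      qevAK m k • dlog m (qevAK m k / qevZ1K m) +
        (qevAK m k / qevZ1K m) • D ℂ (QevK m) (qevZ1K m) := by
    intro k hk
    rw [List.mem_append, List.Ico.mem, List.mem_singleton] at hk
    exact D_eq_smul_dlog_div_add (qevAK_ne_zero (by lia) (by lia)) (qevZ1K_ne_zero (by lia))
  have Ico_eq : List.Ico 1 m = List.Ico 1 (m - 1) ++ [m - 1] := by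
    rw [← List.Ico.succ_top (by lia), Nat.sub_add_cancel (by lia)]
  rw [← ι_mul_prod_map_ι_smul_add_smul D_qevAK, D_qevZ1K hm, map_neg, map_add, neg_mul, add_mul,
    ι_sum_mul_prod_map_ι, add_zero, Ico_eq]
  simp only [List.map_cons, List.map_append, List.prod_cons, List.prod_append, List.map_nil,
    List.prod_nil, mul_one]
  exact ι_mul_prod_map_ι_mul_ι_swap _ _ _ _

theorem qevV_qevZ_of_lt {i j : ℕ} (hi : i < m) (hj : 2 ≤ j ∧ j ≤ 2 * m + 1) :
    qevV m i (qevZ m j) =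
      if j = 2 * i then qevZ m j else if j = 2 * i + 1 then -qevZ m j else 0 := by
  rw [qevV, if_neg hi.ne, if_neg (by lia), qevZ_eq_X hj, mkDerivation_X, qevZ_eq_X hj]

theorem qevV_self_qevZ {j : ℕ} (hj : 2 ≤ j ∧ j ≤ 2 * m + 1) :
    qevV m m (qevZ m j) =
      if j = 2 * m then qevZ m j else if j % 2 = 1 ∧ j ≤ 2 * m - 1 then qevZ m j else 0 := by
  rw [qevV, if_pos rfl, qevZ_eq_X hj, mkDerivation_X, qevZ_eq_X hj]

theorem qevV_succ_qevZ {j : ℕ} (hj : 2 ≤ j ∧ j ≤ 2 * m + 1) :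
    qevV m (m + 1) (qevZ m j) =
      if j = 2 * m + 1 then qevZ m j
      else if j % 2 = 1 ∧ j ≤ 2 * m - 1 then qevZ m j else 0 := by
  rw [qevV, if_neg (by lia), if_pos rfl, qevZ_eq_X hj, mkDerivation_X, qevZ_eq_X hj]

/-- `W i` extends the derivation `V_i` from `R` to `K`, for every `i`. -/
def ExtendsQevV (W : ℕ → Derivation ℂ (QevK m) (QevK m)) : Prop :=
  ∀ i, ∀ g : QevR m,
    W i (algebraMap (QevR m) (QevK m) g) = algebraMap (QevR m) (QevK m) (qevV m i g)

/-- The derivations `H_j = z_{2j} ∂/∂z_{2j} − z_{2j+1} ∂/∂z_{2j+1}` of `K` for `1 ≤ j ≤ m`, built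
from extensions `W i` of `V_i`: they are `V_j` for `j < m`, completed by `H_m = V_m − V_{m+1}`. -/
def qevH (W : ℕ → Derivation ℂ (QevK m) (QevK m)) : ℕ → Derivation ℂ (QevK m) (QevK m) :=
  Function.update W m (W m - W (m + 1))

theorem foldr_contrDer_eq_foldr_qevH (W : ℕ → Derivation ℂ (QevK m) (QevK m))
    (ω : ExteriorAlgebra (QevK m) (Ω[QevK m⁄ℂ])) :
    ((m + 1) :: m :: List.Ico 1 m).foldr (fun i ω => contrDer (W i) ω) ω =
      contrDer (W m) ((m :: List.Ico 1 m).foldr (fun i ω => contrDer (qevH W i) ω) ω) := by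
  have foldr_Ico : (List.Ico 1 m).foldr (fun i ω => contrDer (W i) ω) ω =
      (List.Ico 1 m).foldr (fun i ω => contrDer (qevH W i) ω) ω :=
    List.foldr_ext _ _ _ fun i hi ω => by
      rw [qevH, Function.update_of_ne (List.Ico.mem.1 hi).2.ne]
  rw [List.foldr_cons, List.foldr_cons, foldr_Ico, List.foldr_cons, qevH, Function.update_self]
  simp only [contrDer, map_sub (KaehlerDifferential.linearMapEquivDerivation ℂ (QevK m)).symm]
  exact contractLeft_contractLeft_eq_sub _ _ _

variable {W : ℕ → Derivation ℂ (QevK m) (QevK m)}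

theorem qevH_qevZK_even (hW : ExtendsQevV W) {i k : ℕ} (him : i ≤ m) (hk : 1 ≤ k) (hkm : k ≤ m) :
    qevH W i (qevZK m (2 * k)) = if k = i then qevZK m (2 * k) else 0 := by
  rcases him.lt_or_eq with him | rfl
  · rw [qevH, Function.update_of_ne him.ne, qevZK, hW, qevV_qevZ_of_lt him (by lia)]
    grind
  · rw [qevH, Function.update_self, Derivation.sub_apply, qevZK, hW, hW,
      qevV_self_qevZ (by lia), qevV_succ_qevZ (by lia)]
    grind

theorem qevH_qevZK_odd (hW : ExtendsQevV W) {i k : ℕ} (him : i ≤ m) (hk : 1 ≤ k) (hkm : k ≤ m) :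
    qevH W i (qevZK m (2 * k + 1)) = if k = i then -qevZK m (2 * k + 1) else 0 := by
  rcases him.lt_or_eq with him | rfl
  · rw [qevH, Function.update_of_ne him.ne, qevZK, hW, qevV_qevZ_of_lt him (by lia)]
    grind
  · rw [qevH, Function.update_self, Derivation.sub_apply, qevZK, hW, hW,
      qevV_self_qevZ (by lia), qevV_succ_qevZ (by lia)]
    grind

theorem extension_self_qevAK (hW : ExtendsQevV W) {k : ℕ} (hk : 1 ≤ k) (hkm : k ≤ m) :
    W m (qevAK m k) = qevAK m k := by
  rw [qevAK, hW, qevA, Derivation.leibniz, qevV_self_qevZ (by lia), qevV_self_qevZ (by lia),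
    smul_eq_mul, smul_eq_mul]
  rcases hkm.lt_or_eq with hkm | rfl
  · rw [if_neg (by lia), if_pos (by lia), if_neg (by lia), if_neg (by lia), mul_zero, add_zero]
  · rw [if_neg (by lia), if_neg (by lia), if_pos rfl, mul_zero, zero_add,
      mul_comm (qevZ k (2 * k))]

theorem extension_self_qevZ1K (hW : ExtendsQevV W) : W m (qevZ1K m) = qevZ1K m := by
  rw [qevZ1K_eq_neg_sum, map_neg, map_sum]
  refine congrArg _ (Finset.sum_congr rfl fun k hk => ?_)
  exact extension_self_qevAK hW (Finset.mem_Icc.1 hk).1 (Finset.mem_Icc.1 hk).2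

theorem foldr_qevH_qevOmegaK (hW : ExtendsQevV W) (hm : 1 ≤ m) :
    (m :: List.Ico 1 m).foldr (fun i ω => contrDer (qevH W i) ω) (qevOmegaK m) =
      ((m :: List.Ico 1 m).map fun k => ι (QevK m) (D ℂ (QevK m) (qevAK m k))).prod := by
  have bounds : ∀ k ∈ m :: List.Ico 1 m, 1 ≤ k ∧ k ≤ m := by
    simp only [List.forall_mem_cons, List.Ico.mem]
    lia
  have nodup : (m :: List.Ico 1 m).Nodup :=
    List.nodup_cons.2 ⟨List.Ico.notMem_top, List.Ico.nodup 1 m⟩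
  simp only [contrDer_eq_contractLeft]
  rw [qevOmegaK_eq_prod_pairs hm, foldr_contractLeft_prod_pairs nodup]
  · refine congrArg List.prod (List.map_congr_left fun k hk => ?_)
    obtain ⟨hk1, hkm⟩ := bounds k hk
    rw [Derivation.liftKaehlerDifferential_comp_D, Derivation.liftKaehlerDifferential_comp_D,
      qevH_qevZK_even hW hkm hk1 hkm, qevH_qevZK_odd hW hkm hk1 hkm, if_pos rfl, if_pos rfl,
      neg_smul, sub_neg_eq_add, ← Derivation.leibniz, qevAK_eq_mul]
  · intro i hi k hk hki
    rw [Derivation.liftKaehlerDifferential_comp_D,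
      qevH_qevZK_even hW (bounds i hi).2 (bounds k hk).1 (bounds k hk).2, if_neg hki]
  · intro i hi k hk hki
    rw [Derivation.liftKaehlerDifferential_comp_D,
      qevH_qevZK_odd hW (bounds i hi).2 (bounds k hk).1 (bounds k hk).2, if_neg hki]

theorem contrDer_self_ι_D_qevZ1K_mul (hW : ExtendsQevV W) {l : List ℕ}
    (hl : ∀ k ∈ l, 1 ≤ k ∧ k ≤ m) :
    contrDer (W m) (ι (QevK m) (D ℂ (QevK m) (qevZ1K m)) *
        (l.map fun k => ι (QevK m) (dlog m (qevAK m k / qevZ1K m))).prod) =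
      qevZ1K m • (l.map fun k => ι (QevK m) (dlog m (qevAK m k / qevZ1K m))).prod := by
  have dlog_killed : ∀ k ∈ l,
      (W m).liftKaehlerDifferential (dlog m (qevAK m k / qevZ1K m)) = 0 := by
    intro k hk
    rw [dlog, map_smul, Derivation.liftKaehlerDifferential_comp_D,
      derivation_div_eq_zero (extension_self_qevAK hW (hl k hk).1 (hl k hk).2)
        (extension_self_qevZ1K hW), smul_zero]
  rw [contrDer_eq_contractLeft, CliffordAlgebra.contractLeft_ι_mul,
    Derivation.liftKaehlerDifferential_comp_D, extension_self_qevZ1K hW,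
    contractLeft_prod_map_ι_eq_zero dlog_killed, mul_zero, sub_zero]

end Quadric

/-- Proposition 3.8 of the paper: with `f_j = A_j/z₁` for `j ∈ {1,…,m−2,m}`,
`ι_{V_{m+1}} ι_{V_m} ι_{V₁} ⋯ ι_{V_{m−1}} ((z₁A₁⋯A_{m−2}A_m)⁻¹ Ω)
 = dlog f₁ ∧ ⋯ ∧ dlog f_{m−2} ∧ dlog f_m`,
where the `ι_{V_i}` are the (unique) extensions of the derivations `V_i` to `K`. -/
theorem qev_schubert_contraction (m : ℕ) (hm : 2 ≤ m)
    (W : ℕ → Derivation ℂ (QevK m) (QevK m))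
    (hW : ∀ i, ∀ g : QevR m,
      W i (algebraMap (QevR m) (QevK m) g) = algebraMap (QevR m) (QevK m) (qevV m i g)) :
    ((m + 1) :: m :: List.Ico 1 m).foldr (fun i ω => contrDer (W i) ω)
        (((qevZ1K m * (∏ k ∈ Finset.Icc 1 (m - 2), qevAK m k) * qevAK m m)⁻¹) • qevOmegaK m) =
      (((List.Ico 1 (m - 1)).map (fun k =>
          ExteriorAlgebra.ι (QevK m) (dlog m (qevAK m k / qevZ1K m)))).prod) *
        ExteriorAlgebra.ι (QevK m) (dlog m (qevAK m m / qevZ1K m)) := by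
  have extends_W : ExtendsQevV W := hW
  have bounds : ∀ k ∈ List.Ico 1 (m - 1) ++ [m], 1 ≤ k ∧ k ≤ m := by
    simp only [List.forall_mem_append, List.forall_mem_singleton, List.Ico.mem]
    lia
  have scalar_ne_zero : qevZ1K m * ((List.Ico 1 (m - 1) ++ [m]).map (qevAK m)).prod ≠ 0 :=
    mul_ne_zero (qevZ1K_ne_zero (by lia)) (prod_map_qevAK_ne_zero bounds)
  rw [List.foldr_hom (_ • ·) fun i ω => map_smul (contrDer (W i)) _ ω,
    foldr_contrDer_eq_foldr_qevH, foldr_qevH_qevOmegaK extends_W (by lia), prod_ι_D_qevAK hm,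
    map_smul, contrDer_self_ι_D_qevZ1K_mul extends_W bounds, mul_assoc (qevZ1K m),
    ← prod_map_qevAK, smul_smul, smul_smul, mul_assoc, mul_comm _ (qevZ1K m),
    inv_mul_cancel₀ scalar_ne_zero, one_smul, List.map_append, List.prod_append,
    List.map_singleton, List.prod_singleton]

end
end

section
/- Let m ≥ 2 and define B_k = z₁ + Σ_{i=1}^{k} A_i ∈ R for 1 ≤ k ≤ m−2. Then for every j with 1 ≤ j ≤ m−1, one has in ⋀^{m−1}_K Ω_{K/ℂ}: ι_{V_{m+1}} ι_{V_m} ι_{V₁} ι_{V₂} ⋯ ι_{V_{m−1}} ( (z₁ A₁ ⋯ A_{j−1} · B_j B_{j+1} ⋯ B_{m−2} · A_m)^{−1} Ω ) = dlog g₁ ∧ ⋯ ∧ dlog g_{m−2} ∧ dlog g_m, where g_k = A_k/z₁ for 1 ≤ k ≤ j−1, g_k = B_k/z₁ for j ≤ k ≤ m−2, and g_m = A_m/z₁. (This is Proposition 3.9 of the paper; j = m−1 recovers the Schubert case and j = 1 the Rietsch case for the even quadric Q_{2m}.) -/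
set_option synthInstance.maxHeartbeats 1000000
set_option maxHeartbeats 1000000

noncomputable section

open MvPolynomial

/-- `B_k = z₁ + ∑_{i=1}^k A_i` for `1 ≤ k ≤ m−2`. -/
def qevB (m k : ℕ) : QevR m := qevZ1 m + ∑ i ∈ Finset.Icc 1 k, qevA m i

/-- The image of `B_k` in `K`. -/
def qevBK (m k : ℕ) : QevK m := algebraMap (QevR m) (QevK m) (qevB m k)

/-!
Contracting with `V₁, …, V_{m-1}` replaces each factor `dz_{2k} ∧ dz_{2k+1}` of `Ω` with `k < m` by
`dA_k`, while the remaining factor is `dz_{2m} ∧ dz_{2m+1} = dA_m ∧ dlog z_{2m+1}`. Since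
`z₁ = -∑ A_i`, the factor `dA_{m-1}` can be traded for `-dz₁`, and once `dz₁` is present the
unitriangular substitution of `B_k` for `A_k` does not change the wedge product. Up to sign we are
left with `dlog z_{2m+1} ∧ dz₁ ∧ ⋀ dC_k`, where `C_k` is the numerator of `g_k`.

Both `V_m` and `V_{m+1}` fix all the `A_k`, hence also `z₁` and the `C_k`, but
`V_m z_{2m+1} = 0` whereas `V_{m+1} z_{2m+1} = z_{2m+1}`. Contracting with both therefore strips
`dlog z_{2m+1}` and contracts `dz₁ ∧ ⋀ dC_k` with an Euler field, which yields
`z₁ ∏ C_k · ⋀ dlog (C_k / z₁)`.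
-/

namespace Qev

open CliffordAlgebra (contractLeft contractLeft_one contractLeft_contractLeft)
open ExteriorAlgebra KaehlerDifferential

section Lists

lemma prod_map_smul {R A κ : Type*} [CommMonoid R] [Monoid A] [MulAction R A] [IsScalarTower R A A]
    [SMulCommClass R A A] (l : List κ) (r : κ → R) (a : κ → A) :
    (l.map fun k => r k • a k).prod = (l.map r).prod • (l.map a).prod := by
  induction l with
  | nil => simp
  | cons k l ih => simp only [List.map_cons, List.prod_cons, ih, smul_mul_smul_comm]

lemma prod_map_Ico_two_mul {E : Type*} [Monoid E] (f : ℕ → E) (n : ℕ) :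
    ((List.Ico 2 (2 * n + 2)).map f).prod =
      ((List.Ico 1 (n + 1)).map fun k => f (2 * k) * f (2 * k + 1)).prod := by
  induction n with
  | zero => rfl
  | succ n ih =>
    rw [show 2 * (n + 1) + 2 = 2 * (n + 1) + 1 + 1 from rfl, List.Ico.succ_top (by lia),
      List.Ico.succ_top (by lia), List.Ico.succ_top (n := 1) (by lia), List.map_append,
      List.prod_append, List.map_append, List.prod_append, mul_add_one 2 n, ih]
    simp [mul_add, mul_assoc]

lemma mem_of_lt_of_append_singleton_prefix {κ : Type*} [Preorder κ] {s l : List κ} {i k : κ}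
    (hl : l.Pairwise (· < ·)) (hs : s ++ [k] <+: l) (hi : i ∈ l) (hik : i < k) : i ∈ s := by
  obtain ⟨t, rfl⟩ := hs
  have hkt : ∀ b ∈ t, k < b := (List.pairwise_append.1 hl).2.2 k (by simp)
  simp only [List.mem_append, List.mem_singleton] at hi
  rcases hi with (his | rfl) | hit
  · exact his
  · exact absurd hik (lt_irrefl _)
  · exact absurd hik (hkt i hit).asymm

end Lists

section ExteriorAlgebra

variable {R M κ : Type*} [CommRing R] [AddCommGroup M] [Module R M]

local infixl:70 "⌋" => contractLeft (R := R) (M := M) (Q := 0)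

lemma ι_mul_ι_comm (v w : M) : ι R v * ι R w = -(ι R w * ι R v) :=
  eq_neg_of_add_eq_zero_left (ι_add_mul_swap v w)

lemma ι_mul_mul_ι_self (v : M) (x : ExteriorAlgebra R M) : ι R v * x * ι R v = 0 := by
  induction x using CliffordAlgebra.left_induction with
  | algebraMap r => rw [← Algebra.commutes, mul_assoc, ι_sq_zero, mul_zero]
  | add x y hx hy => rw [mul_add, add_mul, hx, hy, add_zero]
  | ι_mul x w hx =>
    change ι R v * (ι R w * x) * ι R v = 0
    rw [← mul_assoc, ι_mul_ι_comm, neg_mul, neg_mul, mul_assoc (ι R w), mul_assoc (ι R w), hx,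
      mul_zero, neg_zero]

lemma commute_ι_mul_ι (v w : M) (x : ExteriorAlgebra R M) : Commute (ι R v * ι R w) x := by
  induction x using ExteriorAlgebra.induction with
  | algebraMap r => exact (Algebra.commutes r _).symm
  | ι u =>
    calc ι R v * ι R w * ι R u = -(ι R v * ι R u * ι R w) := by
          rw [mul_assoc, ι_mul_ι_comm w u, mul_neg, ← mul_assoc]
      _ = ι R u * (ι R v * ι R w) := by rw [ι_mul_ι_comm v u, neg_mul, neg_neg, mul_assoc]
  | mul a b ha hb => exact ha.mul_right hb
  | add a b ha hb => exact ha.add_right hb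

lemma prod_mul_ι_eq_zero_of_mem {l : List κ} (f : κ → M) {k : κ} (hk : k ∈ l) :
    (l.map fun i => ι R (f i)).prod * ι R (f k) = 0 := by
  obtain ⟨s, t, rfl⟩ := List.append_of_mem hk
  rw [List.map_append, List.prod_append, List.map_cons, List.prod_cons, mul_assoc,
    ι_mul_mul_ι_self, mul_zero]

lemma prod_mul_ι_eq_zero_of_mem_span {l : List κ} {f : κ → M} {v : M}
    (hv : v ∈ Submodule.span R (f '' {i | i ∈ l})) :
    (l.map fun i => ι R (f i)).prod * ι R v = 0 := by
  suffices Submodule.span R (f '' {i | i ∈ l}) ≤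
      (LinearMap.mulLeft R (l.map fun i => ι R (f i)).prod ∘ₗ ι R).ker from this hv
  rw [Submodule.span_le]
  rintro _ ⟨k, hk, rfl⟩
  exact prod_mul_ι_eq_zero_of_mem f hk

lemma ι_mul_prod_mul_ι_eq_zero_of_mem_span {c v : M} {l : List κ} {f : κ → M}
    (hv : v ∈ Submodule.span R (insert c (f '' {i | i ∈ l}))) :
    ι R c * (l.map fun i => ι R (f i)).prod * ι R v = 0 := by
  obtain ⟨r, u, hu, rfl⟩ := Submodule.mem_span_insert.1 hv
  rw [map_add, map_smul, mul_add, mul_smul_comm, ι_mul_mul_ι_self, smul_zero, zero_add, mul_assoc,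
    prod_mul_ι_eq_zero_of_mem_span hu, mul_zero]

lemma ι_mul_prod_congr_of_sub_mem_span {c : M} {l : List κ} {f g : κ → M}
    (h : ∀ s k, s ++ [k] <+: l →
      g k - f k ∈ Submodule.span R (insert c (f '' {i | i ∈ s}))) :
    ι R c * (l.map fun i => ι R (f i)).prod = ι R c * (l.map fun i => ι R (g i)).prod := by
  induction l using List.reverseRecOn with
  | nil => rfl
  | append_singleton l k ih =>
    have last := ι_mul_prod_mul_ι_eq_zero_of_mem_span (h l k List.prefix_rfl)
    rw [map_sub, mul_sub, sub_eq_zero] at last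
    simp only [List.map_append, List.prod_append, List.map_singleton, List.prod_singleton,
      ← mul_assoc]
    rw [← last, ih fun s i hs => h s i (hs.trans (List.prefix_append _ _))]

lemma mul_ι_mul_ι_mul_ι_eq_neg {q : ExteriorAlgebra R M} {a b c : M}
    (h : q * ι R b * ι R (c + a) = 0) (e : M) :
    q * ι R a * (ι R b * ι R e) = -(ι R e * (ι R c * (q * ι R b))) := by
  rw [map_add, mul_add, add_eq_zero_iff_neg_eq] at h
  calc q * ι R a * (ι R b * ι R e) = -(q * ι R b * ι R a * ι R e) := by
        rw [mul_assoc q, ← mul_assoc (ι R a), ι_mul_ι_comm a b]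
        simp only [neg_mul, mul_neg, mul_assoc]
    _ = q * ι R b * (ι R c * ι R e) := by rw [← h, neg_mul, neg_neg, mul_assoc _ (ι R c)]
    _ = ι R c * ι R e * (q * ι R b) := (commute_ι_mul_ι c e _).eq.symm
    _ = -(ι R e * (ι R c * (q * ι R b))) := by rw [ι_mul_ι_comm, neg_mul, mul_assoc]

lemma contractLeft_ι_mul (d : Module.Dual R M) (v : M) (x : ExteriorAlgebra R M) :
    d⌋(ι R v * x) = d v • x - ι R v * (d⌋x) :=
  CliffordAlgebra.contractLeft_ι_mul d v x

lemma contractLeft_ι_mul_ι_mul (d : Module.Dual R M) (u v : M) (x : ExteriorAlgebra R M) :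
    d⌋(ι R u * ι R v * x) = ι R (d u • v - d v • u) * x + ι R u * ι R v * (d⌋x) := by
  rw [mul_assoc, contractLeft_ι_mul, contractLeft_ι_mul, map_sub, map_smul, map_smul, sub_mul,
    mul_sub, mul_smul_comm, smul_mul_assoc, smul_mul_assoc, mul_assoc]
  abel

lemma contractLeft_ι_mul_ι_eq_zero {d : Module.Dual R M} {u v : M} (hu : d u = 0)
    (hv : d v = 0) : d⌋(ι R u * ι R v) = 0 := by
  rw [← mul_one (ι R v), contractLeft_ι_mul, contractLeft_ι_mul, hu, hv, contractLeft_one,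
    zero_smul, zero_smul, mul_zero, sub_zero, mul_zero, sub_zero]

lemma contractLeft_prod_mul_eq_zero {d : Module.Dual R M} {l : List κ} {f : κ → M}
    (hf : ∀ k ∈ l, d (f k) = 0) {x : ExteriorAlgebra R M} (hx : d⌋x = 0) :
    d⌋((l.map fun k => ι R (f k)).prod * x) = 0 := by
  induction l with
  | nil => rwa [List.map_nil, List.prod_nil, one_mul]
  | cons k l ih =>
    rw [List.forall_mem_cons] at hf
    rw [List.map_cons, List.prod_cons, mul_assoc, contractLeft_ι_mul, hf.1, ih hf.2, zero_smul,
      mul_zero, sub_zero]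

lemma contractLeft_contractLeft_ι_mul {d e : Module.Dual R M} {v : M} (hdv : d v = 0)
    (hev : e v = 1) {x : ExteriorAlgebra R M} (hx : e⌋x = d⌋x) :
    e⌋(d⌋(ι R v * x)) = -(d⌋x) := by
  have hzero : e⌋(d⌋x) = 0 := by rw [← hx, contractLeft_contractLeft]
  rw [contractLeft_ι_mul, hdv, zero_smul, zero_sub, map_neg, contractLeft_ι_mul, hev, hzero,
    mul_zero, one_smul, sub_zero]

variable {δ : κ → Module.Dual R M}

lemma foldr_contractLeft_smul (l : List κ) (r : R) (x : ExteriorAlgebra R M) :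
    l.foldr (fun i ω => δ i⌋ω) (r • x) = r • l.foldr (fun i ω => δ i⌋ω) x :=
  List.foldr_hom (r • ·) fun i ω => map_smul (contractLeft (δ i)) r ω

lemma foldr_contractLeft_ι_mul_ι_mul {l : List κ} {u v : M} (hu : ∀ i ∈ l, δ i u = 0)
    (hv : ∀ i ∈ l, δ i v = 0) (x : ExteriorAlgebra R M) :
    l.foldr (fun i ω => δ i⌋ω) (ι R u * ι R v * x) =
      ι R u * ι R v * l.foldr (fun i ω => δ i⌋ω) x := by
  induction l with
  | nil => rfl
  | cons i l ih =>
    rw [List.forall_mem_cons] at hu hv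
    rw [List.foldr_cons, ih hu.2 hv.2, contractLeft_ι_mul_ι_mul, hu.1, hv.1, zero_smul, zero_smul,
      sub_zero, map_zero, zero_mul, zero_add, List.foldr_cons]

lemma foldr_contractLeft_prod_ι_mul_ι_mul {l : List κ} (hl : l.Nodup) {u v : κ → M}
    (hu : ∀ i ∈ l, ∀ k ∈ l, i ≠ k → δ i (u k) = 0)
    (hv : ∀ i ∈ l, ∀ k ∈ l, i ≠ k → δ i (v k) = 0)
    {x : ExteriorAlgebra R M} (hx : ∀ i ∈ l, δ i⌋x = 0) :
    l.foldr (fun i ω => δ i⌋ω) ((l.map fun k => ι R (u k) * ι R (v k)).prod * x) =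
      (l.map fun k => ι R (δ k (u k) • v k - δ k (v k) • u k)).prod * x := by
  induction l with
  | nil => rfl
  | cons i l ih =>
    obtain ⟨hil, hl⟩ := List.nodup_cons.1 hl
    have hne : ∀ k ∈ l, i ≠ k := fun k hk hik => hil (hik ▸ hk)
    simp only [List.forall_mem_cons] at hu hv hx
    have htail : δ i⌋((l.map fun k => ι R (δ k (u k) • v k - δ k (v k) • u k)).prod * x) = 0 := by
      refine contractLeft_prod_mul_eq_zero (fun k hk => ?_) hx.1
      rw [map_sub, map_smul, map_smul, hu.1.2 k hk (hne k hk), hv.1.2 k hk (hne k hk), smul_zero,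
        smul_zero, sub_zero]
    rw [List.foldr_cons, List.map_cons, List.prod_cons, mul_assoc, foldr_contractLeft_ι_mul_ι_mul
      (fun k hk => (hu.2 k hk).1 (hne k hk).symm) (fun k hk => (hv.2 k hk).1 (hne k hk).symm),
      ih hl (fun k hk => (hu.2 k hk).2) (fun k hk => (hv.2 k hk).2) hx.2,
      contractLeft_ι_mul_ι_mul, htail, mul_zero, add_zero, List.map_cons, List.prod_cons, mul_assoc]

end ExteriorAlgebra

lemma contractLeft_ι_mul_prod {K M κ : Type*} [Field K] [AddCommGroup M] [Module K M]
    {d : Module.Dual K M} {c : M} (hc : d c ≠ 0) (l : List κ) (f : κ → M) :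
    contractLeft (Q := 0) d (ι K c * (l.map fun k => ι K (f k)).prod) =
      d c • (l.map fun k => ι K (f k - (d (f k) / d c) • c)).prod := by
  -- Modulo `c`, every factor may be replaced by a vector on which `d` vanishes.
  have hkill : ∀ k ∈ l, d (f k - (d (f k) / d c) • c) = 0 := fun k _ => by
    rw [map_sub, map_smul, smul_eq_mul, div_mul_cancel₀ _ hc, sub_self]
  have hprod := contractLeft_prod_mul_eq_zero hkill (contractLeft_one 0 d)
  rw [ι_mul_prod_congr_of_sub_mem_span (g := fun k => f k - (d (f k) / d c) • c) fun s k _ => ?_,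
    contractLeft_ι_mul, ← mul_one (List.prod _), hprod, mul_zero, sub_zero, mul_one]
  rw [sub_sub_cancel_left, neg_mem_iff]
  exact Submodule.smul_mem _ _ (Submodule.subset_span (Set.mem_insert _ _))

section LogForms

variable {F K κ : Type*} [CommRing F] [Field K] [Algebra F K]

lemma ι_D_mul_mul_ι_inv_smul_D (x : K) {y : K} (hy : y ≠ 0) :
    ι K (D F K (x * y)) * ι K (y⁻¹ • D F K y) = ι K (D F K x) * ι K (D F K y) := by
  rw [Derivation.leibniz, map_add, map_smul, map_smul, map_smul, add_mul, smul_mul_smul_comm,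
    smul_mul_smul_comm, ι_sq_zero, smul_zero, zero_add, mul_inv_cancel₀ hy, one_smul]

lemma smul_inv_smul_D_div {f z : K} (hf : f ≠ 0) (hz : z ≠ 0) :
    f • (f / z)⁻¹ • D F K (f / z) = D F K f - (f / z) • D F K z := by
  rw [Derivation.leibniz_div, smul_smul, smul_smul, smul_sub, smul_smul]
  match_scalars <;> field_simp

lemma contractLeft_ι_D_mul_prod {V : Derivation F K K} {z : K} (hz : z ≠ 0) (hVz : V z = z)
    {l : List κ} {f : κ → K} (hf : ∀ k ∈ l, f k ≠ 0) (hVf : ∀ k ∈ l, V (f k) = f k) :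
    contractLeft (Q := 0) V.liftKaehlerDifferential
        (ι K (D F K z) * (l.map fun k => ι K (D F K (f k))).prod) =
      (z * (l.map f).prod) • (l.map fun k => ι K ((f k / z)⁻¹ • D F K (f k / z))).prod := by
  have hfactor : ∀ k ∈ l, ι K (D F K (f k) - (V (f k) / V z) • D F K z) =
      f k • ι K ((f k / z)⁻¹ • D F K (f k / z)) := fun k hk => by
    rw [hVf k hk, hVz, ← smul_inv_smul_D_div (hf k hk) hz, map_smul]
  rw [contractLeft_ι_mul_prod (by rwa [V.liftKaehlerDifferential_comp_D, hVz])]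
  simp only [Derivation.liftKaehlerDifferential_comp_D]
  rw [List.map_congr_left hfactor, prod_map_smul, hVz, smul_smul]

lemma liftKaehlerDifferential_inv_smul_D (V : Derivation F K K) (f : K) :
    V.liftKaehlerDifferential (f⁻¹ • D F K f) = f⁻¹ * V f := by
  rw [map_smul, Derivation.liftKaehlerDifferential_comp_D, smul_eq_mul]

end LogForms

section NonVanishing

variable {m : ℕ}

lemma eval_one_qevZ {k : ℕ} (hk : 2 ≤ k ∧ k ≤ 2 * m + 1) : eval 1 (qevZ m k) = 1 := by
  rw [qevZ, dif_pos hk, eval_X, Pi.one_apply]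

lemma eval_one_qevA {k : ℕ} (hk : k ∈ Finset.Icc 1 m) : eval 1 (qevA m k) = 1 := by
  rw [Finset.mem_Icc] at hk
  rw [qevA, map_mul, eval_one_qevZ (by lia), eval_one_qevZ (by lia), one_mul]

lemma eval_one_sum_qevA {k : ℕ} (hk : k ≤ m) :
    eval 1 (∑ i ∈ Finset.Icc 1 k, qevA m i) = k := by
  rw [map_sum, Finset.sum_congr rfl fun i hi => eval_one_qevA (Finset.Icc_subset_Icc_right hk hi)]
  simp

lemma qevB_ne_zero {k : ℕ} (hk : k < m) : qevB m k ≠ 0 := by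
  intro h
  have heval : eval 1 (qevB m k) = (k : ℂ) - m := by
    rw [qevB, qevZ1, map_add, map_neg, eval_one_sum_qevA le_rfl, eval_one_sum_qevA hk.le]
    ring
  rw [h, map_zero, eq_comm, sub_eq_zero, Nat.cast_inj] at heval
  exact hk.ne heval

lemma qevAK_ne_zero {k : ℕ} (hk : k ∈ Finset.Icc 1 m) : qevAK m k ≠ 0 := by
  refine (map_ne_zero_iff _ (IsFractionRing.injective (QevR m) (QevK m))).2 fun h => ?_
  simpa [h] using eval_one_qevA hk

lemma qevBK_ne_zero {k : ℕ} (hk : k < m) : qevBK m k ≠ 0 :=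
  (map_ne_zero_iff _ (IsFractionRing.injective (QevR m) (QevK m))).2 (qevB_ne_zero hk)

lemma qevBK_eq (m k : ℕ) : qevBK m k = qevZ1K m + ∑ i ∈ Finset.Icc 1 k, qevAK m i := by
  simp only [qevBK, qevB, qevZ1K, qevAK, map_add, map_sum]

lemma qevZ1K_ne_zero (hm : 0 < m) : qevZ1K m ≠ 0 := by
  simpa [qevBK_eq] using qevBK_ne_zero hm

end NonVanishing

section VectorFields

variable {m i k : ℕ}

lemma qevV_qevZ_of_lt (hi : i < m) (hk : 2 ≤ k ∧ k ≤ 2 * m + 1) : qevV m i (qevZ m k) =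
    if k = 2 * i then qevZ m k else if k = 2 * i + 1 then -qevZ m k else 0 := by
  rw [qevV, if_neg (by lia), if_neg (by lia)]
  conv_lhs => rw [qevZ, dif_pos hk, mkDerivation_X]

lemma qevV_self_qevZ (hk : 2 ≤ k ∧ k ≤ 2 * m + 1) : qevV m m (qevZ m k) =
    if k = 2 * m then qevZ m k else if k % 2 = 1 ∧ k ≤ 2 * m - 1 then qevZ m k else 0 := by
  rw [qevV, if_pos rfl]
  conv_lhs => rw [qevZ, dif_pos hk, mkDerivation_X]

lemma qevV_succ_qevZ (hk : 2 ≤ k ∧ k ≤ 2 * m + 1) : qevV m (m + 1) (qevZ m k) =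
    if k = 2 * m + 1 then qevZ m k
    else if k % 2 = 1 ∧ k ≤ 2 * m - 1 then qevZ m k else 0 := by
  rw [qevV, if_neg (by lia), if_pos rfl]
  conv_lhs => rw [qevZ, dif_pos hk, mkDerivation_X]

lemma qevV_self_qevA (hk : k ∈ Finset.Icc 1 m) : qevV m m (qevA m k) = qevA m k := by
  rw [Finset.mem_Icc] at hk
  rw [qevA, Derivation.leibniz, qevV_self_qevZ (by lia), qevV_self_qevZ (by lia)]
  split_ifs <;> first | lia | simp [mul_comm]

lemma qevV_succ_qevA (hk : k ∈ Finset.Icc 1 m) : qevV m (m + 1) (qevA m k) = qevA m k := by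
  rw [Finset.mem_Icc] at hk
  rw [qevA, Derivation.leibniz, qevV_succ_qevZ (by lia), qevV_succ_qevZ (by lia)]
  split_ifs <;> first | lia | simp [mul_comm]

end VectorFields

local notation "𝐝[" m "]" f:max => ι (QevK m) (D ℂ (QevK m) f)

/-- The coordinate `z_k`, viewed in the fraction field. -/
def qevZK (m k : ℕ) : QevK m := algebraMap (QevR m) (QevK m) (qevZ m k)

/-- The index set `{1, …, m - 2, m}` of the factors `dlog g_k`, in increasing order. -/
def qevIndices (m : ℕ) : List ℕ := List.Ico 1 (m - 1) ++ [m]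

/-- The numerator of `g_k`: it is `B_k` for `j ≤ k ≤ m - 2` and `A_k` for the other indices. -/
def qevNum (m j k : ℕ) : QevK m := if j ≤ k ∧ k < m - 1 then qevBK m k else qevAK m k

section Numerators

variable {m j k : ℕ}

lemma mem_qevIndices : k ∈ qevIndices m ↔ 1 ≤ k ∧ k < m - 1 ∨ k = m := by
  simp [qevIndices]

lemma mem_Icc_of_mem_qevIndices (hm : 0 < m) (hk : k ∈ qevIndices m) : k ∈ Finset.Icc 1 m := by
  rw [mem_qevIndices] at hk
  rw [Finset.mem_Icc]
  lia

lemma pairwise_lt_qevIndices (m : ℕ) : (qevIndices m).Pairwise (· < ·) := by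
  refine List.pairwise_append.2 ⟨List.Ico.pairwise_lt _ _, List.pairwise_singleton _ _, ?_⟩
  simp only [List.Ico.mem, List.mem_singleton]
  lia

lemma prod_map_qevIndices {E : Type*} [Monoid E] (f : ℕ → E) :
    ((qevIndices m).map f).prod = ((List.Ico 1 (m - 1)).map f).prod * f m := by
  rw [qevIndices, List.map_append, List.prod_append, List.map_singleton, List.prod_singleton]

lemma prod_map_qevNum {E : Type*} [Monoid E] (hj : 1 ≤ j ∧ j ≤ m - 1) (F : QevK m → E) :
    ((qevIndices m).map fun k => F (qevNum m j k)).prod =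
      ((List.Ico 1 j).map fun k => F (qevAK m k)).prod *
        ((List.Ico j (m - 1)).map fun k => F (qevBK m k)).prod * F (qevAK m m) := by
  have hA : ∀ k ∈ List.Ico 1 j, F (qevNum m j k) = F (qevAK m k) := fun k hk => by
    rw [qevNum, if_neg (by grind [List.Ico.mem])]
  have hB : ∀ k ∈ List.Ico j (m - 1), F (qevNum m j k) = F (qevBK m k) := fun k hk => by
    rw [qevNum, if_pos (List.Ico.mem.1 hk)]
  rw [prod_map_qevIndices, ← List.Ico.append_consecutive hj.1 hj.2, List.map_append,
    List.prod_append, List.map_congr_left hA, List.map_congr_left hB, qevNum, if_neg (by lia)]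

lemma qevNum_ne_zero (hm : 0 < m) (hk : k ∈ qevIndices m) : qevNum m j k ≠ 0 := by
  rw [qevNum]
  split_ifs with h
  · exact qevBK_ne_zero (by lia)
  · exact qevAK_ne_zero (mem_Icc_of_mem_qevIndices hm hk)

lemma qevZ1K_eq (m : ℕ) : qevZ1K m = -∑ i ∈ Finset.Icc 1 m, qevAK m i := by
  simp only [qevZ1K, qevZ1, qevAK, map_neg, map_sum]

lemma qevAK_eq (m k : ℕ) : qevAK m k = qevZK m (2 * k) * qevZK m (2 * k + 1) := map_mul _ _ _

lemma qevZK_last_ne_zero (hm : 0 < m) : qevZK m (2 * m + 1) ≠ 0 :=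
  right_ne_zero_of_mul (qevAK_eq m m ▸ qevAK_ne_zero (Finset.mem_Icc.2 ⟨hm, le_rfl⟩))

lemma D_qevBK_sub_D_qevAK_mem_span (hk : 1 ≤ k) :
    D ℂ (QevK m) (qevBK m k) - D ℂ (QevK m) (qevAK m k) ∈
      Submodule.span (QevK m) (insert (D ℂ (QevK m) (qevZ1K m))
        ((fun i => D ℂ (QevK m) (qevAK m i)) '' Set.Ico 1 k)) := by
  obtain ⟨k, rfl⟩ := Nat.exists_eq_add_of_le' hk
  rw [qevBK_eq, Finset.sum_Icc_succ_top (by lia), map_add, map_add, ← add_assoc,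
    add_sub_cancel_right, map_sum]
  refine add_mem (Submodule.subset_span (Set.mem_insert _ _)) (sum_mem fun i hi => ?_)
  refine Submodule.subset_span (Set.mem_insert_of_mem _ ⟨i, ?_, rfl⟩)
  grind

lemma D_qevZ1K_add_D_qevAK_pred_mem_span (hm : 2 ≤ m) :
    D ℂ (QevK m) (qevZ1K m) + D ℂ (QevK m) (qevAK m (m - 1)) ∈
      Submodule.span (QevK m)
        ((fun i => D ℂ (QevK m) (qevAK m i)) '' {i | i ∈ qevIndices m}) := by
  have hmem : m - 1 ∈ Finset.Icc 1 m := by grind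
  rw [qevZ1K_eq, ← Finset.sum_erase_add _ _ hmem, ← map_add, neg_add, neg_add_cancel_right,
    map_neg, map_sum]
  refine neg_mem (sum_mem fun i hi => Submodule.subset_span ⟨i, ?_, rfl⟩)
  exact mem_qevIndices.2 (by grind)

lemma ι_D_qevZ1K_mul_prod_qevAK_eq_qevNum (m j : ℕ) :
    𝐝[m] (qevZ1K m) * ((qevIndices m).map fun k => 𝐝[m] (qevAK m k)).prod =
      𝐝[m] (qevZ1K m) * ((qevIndices m).map fun k => 𝐝[m] (qevNum m j k)).prod := by
  refine ι_mul_prod_congr_of_sub_mem_span fun s k hs => ?_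
  rw [qevNum]
  split_ifs with h
  · have hk : 1 ≤ k := by
      have := mem_qevIndices.1 (hs.subset (List.mem_append_right s (List.mem_singleton_self k)))
      lia
    refine Submodule.span_mono (Set.insert_subset_insert (Set.image_mono fun i hi => ?_))
      (D_qevBK_sub_D_qevAK_mem_span hk)
    refine mem_of_lt_of_append_singleton_prefix (pairwise_lt_qevIndices m) hs ?_ hi.2
    exact mem_qevIndices.2 (Or.inl ⟨hi.1, hi.2.trans h.2⟩)
  · rw [sub_self]
    exact zero_mem _

lemma prod_ι_D_qevAK_mul_eq_qevNum (hm : 2 ≤ m) (j : ℕ) :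
    ((List.Ico 1 m).map fun k => 𝐝[m] (qevAK m k)).prod *
        (𝐝[m] (qevZK m (2 * m)) * 𝐝[m] (qevZK m (2 * m + 1))) =
      -(ι (QevK m) (dlog m (qevZK m (2 * m + 1))) * (𝐝[m] (qevZ1K m) *
        ((qevIndices m).map fun k => 𝐝[m] (qevNum m j k)).prod)) := by
  have hsplit : List.Ico 1 m = List.Ico 1 (m - 1) ++ [m - 1] := by
    rw [← List.Ico.succ_top (by lia), Nat.sub_add_cancel (by lia)]
  have hkill := prod_mul_ι_eq_zero_of_mem_span (D_qevZ1K_add_D_qevAK_pred_mem_span hm)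
  rw [prod_map_qevIndices] at hkill
  have hlast := ι_D_mul_mul_ι_inv_smul_D (F := ℂ) (qevZK m (2 * m))
    (qevZK_last_ne_zero (m := m) (by lia))
  rw [← qevAK_eq] at hlast
  rw [← ι_D_qevZ1K_mul_prod_qevAK_eq_qevNum, prod_map_qevIndices, ← hlast, hsplit, List.map_append,
    List.prod_append, List.map_singleton, List.prod_singleton]
  exact mul_ι_mul_ι_mul_ι_eq_neg hkill _

end Numerators

section Extensions

variable {m j k : ℕ} {V : Derivation ℂ (QevK m) (QevK m)}

lemma map_qevZ1K_of_map_qevAK (hV : ∀ k ∈ Finset.Icc 1 m, V (qevAK m k) = qevAK m k) :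
    V (qevZ1K m) = qevZ1K m := by
  rw [qevZ1K_eq, map_neg, map_sum, Finset.sum_congr rfl hV]

lemma map_qevNum_of_map_qevAK (hV : ∀ k ∈ Finset.Icc 1 m, V (qevAK m k) = qevAK m k) (hm : 0 < m)
    (hk : k ∈ qevIndices m) : V (qevNum m j k) = qevNum m j k := by
  rw [qevNum]
  split_ifs with h
  · rw [qevBK_eq, map_add, map_sum, map_qevZ1K_of_map_qevAK hV,
      Finset.sum_congr rfl fun i hi => hV i (Finset.Icc_subset_Icc_right (by lia) hi)]
  · exact hV k (mem_Icc_of_mem_qevIndices hm hk)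

lemma contrDer_ι_D_qevZ1K_mul_prod_qevNum
    (hV : ∀ k ∈ Finset.Icc 1 m, V (qevAK m k) = qevAK m k) (hm : 0 < m) (j : ℕ) :
    contrDer V (𝐝[m] (qevZ1K m) * ((qevIndices m).map fun k => 𝐝[m] (qevNum m j k)).prod) =
      (qevZ1K m * ((qevIndices m).map (qevNum m j)).prod) •
        ((qevIndices m).map fun k => ι (QevK m) (dlog m (qevNum m j k / qevZ1K m))).prod :=
  contractLeft_ι_D_mul_prod (qevZ1K_ne_zero hm) (map_qevZ1K_of_map_qevAK hV)
    (fun _ => qevNum_ne_zero hm) fun _ => map_qevNum_of_map_qevAK hV hm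

end Extensions


section Contraction

variable {m i k : ℕ}

lemma map_qevZK {V : Derivation ℂ (QevK m) (QevK m)}
    (hV : ∀ g, V (algebraMap (QevR m) (QevK m) g) = algebraMap (QevR m) (QevK m) (qevV m i g))
    (hi : i < m) (hk : 2 ≤ k ∧ k ≤ 2 * m + 1) : V (qevZK m k) =
      if k = 2 * i then qevZK m k else if k = 2 * i + 1 then -qevZK m k else 0 := by
  rw [qevZK, hV, qevV_qevZ_of_lt hi hk]
  simp only [apply_ite (algebraMap (QevR m) (QevK m)), map_neg, map_zero]

lemma qevOmegaK_eq (m : ℕ) : qevOmegaK m =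
    ((List.Ico 1 (m + 1)).map fun k => 𝐝[m] (qevZK m (2 * k)) * 𝐝[m] (qevZK m (2 * k + 1))).prod :=
  prod_map_Ico_two_mul (fun k => 𝐝[m] (qevZK m k)) m

lemma foldr_contrDer_qevOmegaK {W : ℕ → Derivation ℂ (QevK m) (QevK m)}
    (hW : ∀ i, ∀ g : QevR m,
      W i (algebraMap (QevR m) (QevK m) g) = algebraMap (QevR m) (QevK m) (qevV m i g))
    (hm : 0 < m) :
    (List.Ico 1 m).foldr (fun i ω => contrDer (W i) ω) (qevOmegaK m) =
      ((List.Ico 1 m).map fun k => 𝐝[m] (qevAK m k)).prod *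
        (𝐝[m] (qevZK m (2 * m)) * 𝐝[m] (qevZK m (2 * m + 1))) := by
  have hoff : ∀ i ∈ List.Ico 1 m, ∀ k, 2 ≤ k ∧ k ≤ 2 * m + 1 → k ≠ 2 * i → k ≠ 2 * i + 1 →
      (W i).liftKaehlerDifferential (D ℂ (QevK m) (qevZK m k)) = 0 := fun i hi k hk he ho => by
    rw [(W i).liftKaehlerDifferential_comp_D, map_qevZK (hW i) (List.Ico.mem.1 hi).2 hk, if_neg he,
      if_neg ho]
  have hlast : ∀ i ∈ List.Ico 1 m, contrDer (W i)
      (𝐝[m] (qevZK m (2 * m)) * 𝐝[m] (qevZK m (2 * m + 1))) = 0 := fun i hi => by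
    have him := List.Ico.mem.1 hi
    exact contractLeft_ι_mul_ι_eq_zero (hoff i hi _ (by lia) (by lia) (by lia))
      (hoff i hi _ (by lia) (by lia) (by lia))
  rw [qevOmegaK_eq, List.Ico.succ_top (by lia), List.map_append, List.prod_append,
    List.map_singleton, List.prod_singleton]
  refine (foldr_contractLeft_prod_ι_mul_ι_mul (δ := fun i => (W i).liftKaehlerDifferential)
    (List.Ico.nodup 1 m) (fun i hi k hk hik => ?_) (fun i hi k hk hik => ?_) hlast).trans ?_
  · have hkm := List.Ico.mem.1 hk
    exact hoff i hi _ (by lia) (by lia) (by lia)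
  · have hkm := List.Ico.mem.1 hk
    exact hoff i hi _ (by lia) (by lia) (by lia)
  · congr 2
    refine List.map_congr_left fun k hk => ?_
    rw [List.Ico.mem] at hk
    simp only [Derivation.liftKaehlerDifferential_comp_D]
    rw [map_qevZK (hW k) hk.2 (by lia), map_qevZK (hW k) hk.2 (by lia), if_pos rfl,
      if_neg (by lia), if_pos rfl, neg_smul, sub_neg_eq_add, qevAK_eq, Derivation.leibniz]

end Contraction

section LastContractions

variable {m : ℕ} {V : Derivation ℂ (QevK m) (QevK m)}

lemma map_qevAK_of_self
    (hV : ∀ g, V (algebraMap (QevR m) (QevK m) g) = algebraMap (QevR m) (QevK m) (qevV m m g)) :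
    ∀ k ∈ Finset.Icc 1 m, V (qevAK m k) = qevAK m k := fun k hk => by
  rw [qevAK, hV, qevV_self_qevA hk]

lemma map_qevAK_of_succ
    (hV : ∀ g, V (algebraMap (QevR m) (QevK m) g) =
      algebraMap (QevR m) (QevK m) (qevV m (m + 1) g)) :
    ∀ k ∈ Finset.Icc 1 m, V (qevAK m k) = qevAK m k := fun k hk => by
  rw [qevAK, hV, qevV_succ_qevA hk]

lemma liftKaehlerDifferential_dlog_qevZK_last_of_self
    (hV : ∀ g, V (algebraMap (QevR m) (QevK m) g) = algebraMap (QevR m) (QevK m) (qevV m m g))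
    (hm : 0 < m) : V.liftKaehlerDifferential (dlog m (qevZK m (2 * m + 1))) = 0 := by
  rw [dlog, liftKaehlerDifferential_inv_smul_D, qevZK, hV, qevV_self_qevZ (by lia), if_neg (by lia),
    if_neg (by lia), map_zero, mul_zero]

lemma liftKaehlerDifferential_dlog_qevZK_last_of_succ
    (hV : ∀ g, V (algebraMap (QevR m) (QevK m) g) =
      algebraMap (QevR m) (QevK m) (qevV m (m + 1) g))
    (hm : 0 < m) : V.liftKaehlerDifferential (dlog m (qevZK m (2 * m + 1))) = 1 := by
  rw [dlog, liftKaehlerDifferential_inv_smul_D]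
  nth_rw 2 [qevZK]
  rw [hV, qevV_succ_qevZ (by lia), if_pos rfl, ← qevZK, inv_mul_cancel₀ (qevZK_last_ne_zero hm)]

end LastContractions

lemma foldr_contrDer_qevOmegaK_eq_smul_prod_dlog {m : ℕ} (hm : 2 ≤ m) (j : ℕ)
    {W : ℕ → Derivation ℂ (QevK m) (QevK m)}
    (hW : ∀ i, ∀ g : QevR m,
      W i (algebraMap (QevR m) (QevK m) g) = algebraMap (QevR m) (QevK m) (qevV m i g)) :
    ((m + 1) :: m :: List.Ico 1 m).foldr (fun i ω => contrDer (W i) ω) (qevOmegaK m) =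
      (qevZ1K m * ((qevIndices m).map (qevNum m j)).prod) •
        ((qevIndices m).map fun k => ι (QevK m) (dlog m (qevNum m j k / qevZ1K m))).prod := by
  have hm0 : 0 < m := by lia
  have hself := contrDer_ι_D_qevZ1K_mul_prod_qevNum (map_qevAK_of_self (hW m)) hm0 j
  have hsucc := contrDer_ι_D_qevZ1K_mul_prod_qevNum (map_qevAK_of_succ (hW (m + 1))) hm0 j
  have hstrip := contractLeft_contractLeft_ι_mul
    (liftKaehlerDifferential_dlog_qevZK_last_of_self (hW m) hm0)
    (liftKaehlerDifferential_dlog_qevZK_last_of_succ (hW (m + 1)) hm0) (hsucc.trans hself.symm)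
  rw [List.foldr_cons, List.foldr_cons, foldr_contrDer_qevOmegaK hW hm0,
    prod_ι_D_qevAK_mul_eq_qevNum hm j, map_neg, map_neg, ← hself]
  exact neg_eq_iff_eq_neg.2 hstrip

lemma qevZ1K_mul_prod_qevNum_ne_zero {m : ℕ} (hm : 0 < m) (j : ℕ) :
    qevZ1K m * ((qevIndices m).map (qevNum m j)).prod ≠ 0 := by
  refine mul_ne_zero (qevZ1K_ne_zero hm) (List.prod_ne_zero ?_)
  rw [List.mem_map]
  rintro ⟨k, hk, hzero⟩
  exact qevNum_ne_zero hm hk hzero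

lemma qevZ1K_mul_prod_mul_prod_mul_qevAK_eq {m j : ℕ} (hj : 1 ≤ j ∧ j ≤ m - 1) :
    qevZ1K m * (∏ k ∈ Finset.Ico 1 j, qevAK m k) * (∏ k ∈ Finset.Icc j (m - 2), qevBK m k) *
      qevAK m m = qevZ1K m * ((qevIndices m).map (qevNum m j)).prod := by
  have hIcc : Finset.Icc j (m - 2) = Finset.Ico j (m - 1) := by
    ext k
    rw [Finset.mem_Icc, Finset.mem_Ico]
    lia
  have hprod := prod_map_qevNum hj (id : QevK m → QevK m)
  simp only [id] at hprod
  rw [hprod, hIcc, ← mul_assoc, ← mul_assoc]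
  rfl

end Qev

/-- Proposition 3.9 of the paper: for every `1 ≤ j ≤ m−1`,
`ι_{V_{m+1}} ι_{V_m} ι_{V₁} ⋯ ι_{V_{m−1}} ((z₁A₁⋯A_{j−1}·B_j⋯B_{m−2}·A_m)⁻¹ Ω)
 = dlog g₁ ∧ ⋯ ∧ dlog g_{m−2} ∧ dlog g_m`
with `g_k = A_k/z₁` for `1 ≤ k ≤ j−1`, `g_k = B_k/z₁` for `j ≤ k ≤ m−2` and
`g_m = A_m/z₁`, where the `ι_{V_i}` are the (unique) extensions of the
derivations `V_i` to `K`. -/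
theorem qev_general_contraction (m : ℕ) (hm : 2 ≤ m) (j : ℕ) (hj : 1 ≤ j ∧ j ≤ m - 1)
    (W : ℕ → Derivation ℂ (QevK m) (QevK m))
    (hW : ∀ i, ∀ g : QevR m,
      W i (algebraMap (QevR m) (QevK m) g) = algebraMap (QevR m) (QevK m) (qevV m i g)) :
    ((m + 1) :: m :: List.Ico 1 m).foldr (fun i ω => contrDer (W i) ω)
        (((qevZ1K m * (∏ k ∈ Finset.Ico 1 j, qevAK m k) *
            (∏ k ∈ Finset.Icc j (m - 2), qevBK m k) * qevAK m m)⁻¹) • qevOmegaK m) =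
      (((List.Ico 1 j).map (fun k =>
          ExteriorAlgebra.ι (QevK m) (dlog m (qevAK m k / qevZ1K m)))).prod) *
        (((List.Ico j (m - 1)).map (fun k =>
          ExteriorAlgebra.ι (QevK m) (dlog m (qevBK m k / qevZ1K m)))).prod) *
        ExteriorAlgebra.ι (QevK m) (dlog m (qevAK m m / qevZ1K m)) := by
  rw [Qev.qevZ1K_mul_prod_mul_prod_mul_qevAK_eq hj,
    ← Qev.prod_map_qevNum hj fun f => ExteriorAlgebra.ι (QevK m) (dlog m (f / qevZ1K m))]
  refine (Qev.foldr_contractLeft_smul _ _ _).trans ?_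
  refine (congrArg _ (Qev.foldr_contrDer_qevOmegaK_eq_smul_prod_dlog hm j hW)).trans ?_
  exact inv_smul_smul₀ (Qev.qevZ1K_mul_prod_qevNum_ne_zero (by lia) j) _

end
end
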